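/- arXiv:1407.7347 — 3 statements merged into one kernel-verified Lean document; each statement's English description precedes it below -/
import Mathlib

section
/- Assume g_{ij}^{kl} ∈ ℝ for 0 ≤ i,j,k,l ≤ 2 with g_{ij}^{kl} = g_{ij}^{lk} and g_{ij}^{kl} = g_{ji}^{kl}, and Σ_{i,j,k,l=0}^2 g_{ij}^{kl} p_i p_j p_k p_l = 0 for every p = (p₀,p₁,p₂) ∈ ℝ³ satisfying p₀² = p₁² + p₂². Then there exists a constant C > 0 (depending only on the g_{ij}^{kl}) such that for all T > 0, all f, g, h ∈ C^∞([0,T]×ℝ²), and all (t,x) ∈ [0,T]×ℝ² with x ≠ 0: |Σ_{i,j,k,l=0}^2 g_{ij}^{kl}(∂_i f ∂_j g ∂²_{kl} h)(t,x)| ≤ C(|∂f(t,x)||∂g(t,x)||Z∂h(t,x)| + |∂f(t,x)||Zg(t,x)||∂²h(t,x)| + |Zf(t,x)||∂g(t,x)||∂²h(t,x)|). -/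
/-!
Let `ω = (-1, x/|x|, y/|x|)`, a null covector with entries bounded by `1`. With `Z₀ = 0`, one has
`∂ᵢ = Zᵢ - ωᵢ ∂ₜ`, and since second derivatives commute (`pdi_comm`),
`∂²ₖₗ = ωₖ ωₗ ∂ₜ² + (Zₖ∂ₗ - ωₖ Zₗ∂ₜ)`. Replacing the factors `∂ᵢf`, `∂ⱼh`, `∂²ₖₗk` one at a time by
`-ωᵢ∂ₜf`, `-ωⱼ∂ₜh`, `ωₖωₗ∂ₜ²k` costs, in each step, a product containing one good derivative `Z`.
What is left is `(∑ g ωᵢωⱼωₖωₗ) ∂ₜf ∂ₜh ∂ₜ²k`, which vanishes by the null condition.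
The algebraic part is `null_algebra`; it gives the constant `2 ∑ |g| + 1`.
-/

noncomputable section

open Real MeasureTheory Set

set_option linter.unusedVariables false

/-- A function of time `t` and space `(x, y)`. -/
abbrev F3 : Type := ℝ → ℝ → ℝ → ℝ

/-- Partial derivative in time. -/
def pt (f : F3) : F3 := fun t x y => deriv (fun s => f s x y) t
/-- Partial derivative in the first space variable. -/
def px (f : F3) : F3 := fun t x y => deriv (fun s => f t s y) x
/-- Partial derivative in the second space variable. -/
def py (f : F3) : F3 := fun t x y => deriv (fun s => f t x s) y

/-- `∂ = (∂_t, ∂_1, ∂_2)`. -/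
def pdi : Fin 3 → F3 → F3 := ![pt, px, py]

/-- The scaling field `X = t∂_t + x₁∂₁ + x₂∂₂`. -/
def Xf (f : F3) : F3 := fun t x y => t * pt f t x y + x * px f t x y + y * py f t x y
/-- The rotation field `Ω = x₁∂₂ − x₂∂₁`. -/
def Om (f : F3) : F3 := fun t x y => x * py f t x y - y * px f t x y
/-- The Lorentz boost `L₁ = t∂₁ + x₁∂_t`. -/
def L1f (f : F3) : F3 := fun t x y => t * px f t x y + x * pt f t x y
/-- The Lorentz boost `L₂ = t∂₂ + x₂∂_t`. -/
def L2f (f : F3) : F3 := fun t x y => t * py f t x y + y * pt f t x y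

/-- The family `Γ = (∂_t, ∂_1, ∂_2, X)`. -/
def GammaF : Fin 4 → F3 → F3 := ![pt, px, py, Xf]

/-- Iterated composition `Γ^α` over a word `α`. -/
def GIter : List (Fin 4) → F3 → F3
  | [], f => f
  | a :: l, f => GammaF a (GIter l f)

/-- The family `Λ = (∂_t, ∂_1, ∂_2, Ω, X, L₁, L₂)`. -/
def LamF : Fin 7 → F3 → F3 := ![pt, px, py, Om, Xf, L1f, L2f]

/-- Iterated composition `Λ^α` over a word `α`. -/
def LIter : List (Fin 7) → F3 → F3
  | [], f => f
  | a :: l, f => LamF a (LIter l f)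

/-- Iterated composition `∂^β` over a word `β`. -/
def PIter : List (Fin 3) → F3 → F3
  | [], f => f
  | a :: l, f => pdi a (PIter l f)

/-- `r = |x|`. -/
def rad (x y : ℝ) : ℝ := Real.sqrt (x ^ 2 + y ^ 2)
/-- `σ₋(t,x) = 1 + |t − |x||`. -/
def sm (t x y : ℝ) : ℝ := 1 + |t - rad x y|
/-- `σ₊(t,x) = 1 + t + |x|`. -/
def sp (t x y : ℝ) : ℝ := 1 + t + rad x y

/-- `f` is a `C^∞` function of `(t, x)`. -/
def Smooth3 (f : F3) : Prop := ContDiff ℝ (⊤ : ℕ∞) (fun p : ℝ × ℝ × ℝ => f p.1 p.2.1 p.2.2)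

/-- `Z₁ = ∂₁ + (x₁/|x|)∂_t`. -/
def Z1 (f : F3) : F3 := fun t x y => px f t x y + (x / rad x y) * pt f t x y
/-- `Z₂ = ∂₂ + (x₂/|x|)∂_t`. -/
def Z2 (f : F3) : F3 := fun t x y => py f t x y + (y / rad x y) * pt f t x y
/-- The family `Z = (Z₁, Z₂)`. -/
def Zi : Fin 2 → F3 → F3 := ![Z1, Z2]

/-- `f` is radially symmetric in the space variables. -/
def RadialF (f : F3) : Prop := ∀ t x y x' y', rad x y = rad x' y' → f t x y = f t x' y'

/-- The standard basis of `ℝ × ℝ × ℝ`. -/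
def stdVec : Fin 3 → ℝ × ℝ × ℝ := ![(1, 0, 0), (0, 1, 0), (0, 0, 1)]

/-- The coordinate derivatives are values of the Fréchet derivative of the uncurried function. -/
lemma pdi_eq_fderiv (f : F3)
    (hf : Differentiable ℝ (fun p : ℝ × ℝ × ℝ => f p.1 p.2.1 p.2.2)) (i : Fin 3) (t x y : ℝ) :
    pdi i f t x y
      = fderiv ℝ (fun p : ℝ × ℝ × ℝ => f p.1 p.2.1 p.2.2) (t, x, y) (stdVec i) := by
  have hF := (hf (t, x, y)).hasFDerivAt
  fin_cases i
  · have hc : HasDerivAt (fun s : ℝ => ((s, x, y) : ℝ × ℝ × ℝ)) (1, 0, 0) t :=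
      (hasDerivAt_id t).prodMk ((hasDerivAt_const t x).prodMk (hasDerivAt_const t y))
    exact (HasFDerivAt.comp_hasDerivAt t hF hc).deriv
  · have hc : HasDerivAt (fun s : ℝ => ((t, s, y) : ℝ × ℝ × ℝ)) (0, 1, 0) x :=
      (hasDerivAt_const x t).prodMk ((hasDerivAt_id x).prodMk (hasDerivAt_const x y))
    exact (HasFDerivAt.comp_hasDerivAt x hF hc).deriv
  · have hc : HasDerivAt (fun s : ℝ => ((t, x, s) : ℝ × ℝ × ℝ)) (0, 0, 1) y :=
      (hasDerivAt_const y t).prodMk ((hasDerivAt_const y x).prodMk (hasDerivAt_id y))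
    exact (HasFDerivAt.comp_hasDerivAt y hF hc).deriv

lemma pdi_comm (f : F3) (hf : Smooth3 f) (i j : Fin 3) (t x y : ℝ) :
    pdi i (pdi j f) t x y = pdi j (pdi i f) t x y := by
  unfold Smooth3 at hf
  set F : ℝ × ℝ × ℝ → ℝ := fun p => f p.1 p.2.1 p.2.2 with hFdef
  have hF : Differentiable ℝ F := hf.differentiable (by simp)
  have h2 : (2 : WithTop ℕ∞) ≤ ((⊤ : ℕ∞) : WithTop ℕ∞) :=
    WithTop.coe_le_coe.2 (le_top : (2 : ℕ∞) ≤ ⊤)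
  have hdF : Differentiable ℝ (fderiv ℝ F) :=
    (hf.fderiv_right (m := 1) (one_add_one_eq_two.trans_le h2)).differentiable (by simp)
  have key : ∀ a b : Fin 3, pdi a (pdi b f) t x y
      = fderiv ℝ (fderiv ℝ F) (t, x, y) (stdVec a) (stdVec b) := by
    intro a b
    have hb : (fun p : ℝ × ℝ × ℝ => pdi b f p.1 p.2.1 p.2.2)
        = fun p => fderiv ℝ F p (stdVec b) := by
      funext p
      exact pdi_eq_fderiv f hF b _ _ _
    have hdb : Differentiable ℝ (fun p => fderiv ℝ F p (stdVec b)) :=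
      hdF.clm_apply (differentiable_const _)
    rw [pdi_eq_fderiv (pdi b f) (by rw [hb]; exact hdb), hb,
      fderiv_clm_apply (hdF _) (differentiableAt_const _)]
    simp
  rw [key, key]
  exact (hf.contDiffAt.isSymmSndFDerivAt
    (by simpa using h2)).eq _ _

/-- The pointwise estimate in algebraic form: `A`, `B`, `K` stand for `∂f`, `∂h`, `∂²k`, and
`a`, `b`, `c` for `Zf`, `Zh`, `Z∂k`, extended by `Z₀ = 0`. -/
lemma null_algebra (g : Fin 3 → Fin 3 → Fin 3 → Fin 3 → ℝ) (w A B a b : Fin 3 → ℝ)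
    (K c : Fin 3 → Fin 3 → ℝ) (MA MB MK ma mb mc : ℝ)
    (hw : ∀ i, |w i| ≤ 1)
    (hnull : ∑ i, ∑ j, ∑ k, ∑ l, g i j k l * w i * w j * w k * w l = 0)
    (hA : ∀ i, A i = a i - w i * A 0) (hB : ∀ i, B i = b i - w i * B 0)
    (hK : ∀ k l, K k l = c k l - w k * K 0 l) (hKs : ∀ k l, K k l = K l k)
    (bA : ∀ i, |A i| ≤ MA) (bB : ∀ i, |B i| ≤ MB) (bK : ∀ i j, |K i j| ≤ MK)
    (ba : ∀ i, |a i| ≤ ma) (bb : ∀ i, |b i| ≤ mb) (bc : ∀ i j, |c i j| ≤ mc) :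
    |∑ i, ∑ j, ∑ k, ∑ l, g i j k l * A i * B j * K k l| ≤
      (2 * (∑ i, ∑ j, ∑ k, ∑ l, |g i j k l|) + 1) *
        (MA * MB * mc + MA * mb * MK + ma * MB * MK) := by
  set R := MA * MB * mc + MA * mb * MK + ma * MB * MK with hR
  have pA : 0 ≤ MA := (abs_nonneg _).trans (bA 0)
  have pB : 0 ≤ MB := (abs_nonneg _).trans (bB 0)
  have pK : 0 ≤ MK := (abs_nonneg _).trans (bK 0 0)
  have pa : 0 ≤ ma := (abs_nonneg _).trans (ba 0)
  have pb : 0 ≤ mb := (abs_nonneg _).trans (bb 0)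
  have pc : 0 ≤ mc := (abs_nonneg _).trans (bc 0 0)
  have pR : 0 ≤ R := by positivity
  have term : ∀ i j k l,
      |A i * B j * K k l - w i * w j * w k * w l * (A 0 * B 0 * K 0 0)| ≤ 2 * R := by
    intro i j k l
    have hd : K k l = (c k l - w k * c l 0) + w k * w l * K 0 0 := by
      rw [hK k l, hKs 0 l, hK l 0]; ring
    have e : A i * B j * K k l - w i * w j * w k * w l * (A 0 * B 0 * K 0 0)
        = a i * B j * K k l + -(w i * A 0 * b j * K k l)
          + w i * w j * A 0 * B 0 * (c k l - w k * c l 0) := by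
      linear_combination B j * K k l * hA i - w i * A 0 * K k l * hB j
        + w i * w j * A 0 * B 0 * hd
    have h1 : |a i * B j * K k l| ≤ ma * MB * MK := by
      rw [abs_mul, abs_mul]
      gcongr
      exacts [ba i, bB j, bK k l]
    have h2 : |-(w i * A 0 * b j * K k l)| ≤ 1 * MA * mb * MK := by
      rw [abs_neg, abs_mul, abs_mul, abs_mul]
      gcongr
      exacts [hw i, bA 0, bb j, bK k l]
    have h3' : |c k l - w k * c l 0| ≤ mc + 1 * mc := by
      refine (abs_sub _ _).trans ?_
      rw [abs_mul]
      gcongr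
      exacts [bc k l, hw k, bc l 0]
    have h3 : |w i * w j * A 0 * B 0 * (c k l - w k * c l 0)|
        ≤ 1 * 1 * MA * MB * (mc + 1 * mc) := by
      rw [abs_mul, abs_mul, abs_mul, abs_mul]
      gcongr
      exacts [hw i, hw j, bA 0, bB 0]
    rw [e]
    refine (abs_add_three _ _ _).trans ?_
    have q1 : 0 ≤ MA * mb * MK := by positivity
    have q2 : 0 ≤ ma * MB * MK := by positivity
    rw [hR]
    linarith
  -- Subtract the vanishing null form times `A₀ B₀ K₀₀`.
  have hsum : ∑ i, ∑ j, ∑ k, ∑ l, g i j k l * A i * B j * K k l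
      = ∑ i, ∑ j, ∑ k, ∑ l, g i j k l *
        (A i * B j * K k l - w i * w j * w k * w l * (A 0 * B 0 * K 0 0)) := by
    have h0 : ∑ i, ∑ j, ∑ k, ∑ l,
        g i j k l * w i * w j * w k * w l * (A 0 * B 0 * K 0 0) = 0 := by
      simp only [← Finset.sum_mul, hnull, zero_mul]
    rw [← sub_zero (∑ i, ∑ j, ∑ k, ∑ l, g i j k l * A i * B j * K k l), ← h0]
    simp only [← Finset.sum_sub_distrib]
    refine Finset.sum_congr rfl fun i _ => Finset.sum_congr rfl fun j _ =>
      Finset.sum_congr rfl fun k _ => Finset.sum_congr rfl fun l _ => ?_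
    ring
  have hle : |∑ i, ∑ j, ∑ k, ∑ l, g i j k l * A i * B j * K k l|
      ≤ ∑ i, ∑ j, ∑ k, ∑ l, |g i j k l| * (2 * R) := by
    rw [hsum]
    refine (Finset.abs_sum_le_sum_abs _ _).trans (Finset.sum_le_sum fun i _ => ?_)
    refine (Finset.abs_sum_le_sum_abs _ _).trans (Finset.sum_le_sum fun j _ => ?_)
    refine (Finset.abs_sum_le_sum_abs _ _).trans (Finset.sum_le_sum fun k _ => ?_)
    refine (Finset.abs_sum_le_sum_abs _ _).trans (Finset.sum_le_sum fun l _ => ?_)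
    rw [abs_mul]
    exact mul_le_mul_of_nonneg_left (term i j k l) (abs_nonneg _)
  simp only [← Finset.sum_mul] at hle
  linarith

/-- The fields `Zᵢ` indexed like `∂ᵢ`, with `Z₀ = 0`. -/
def ZExt : Fin 3 → F3 → F3 := ![fun _ _ _ _ => 0, Z1, Z2]

/-- The null covector `(-1, x/|x|, y/|x|)`. -/
def nullCov (x y : ℝ) : Fin 3 → ℝ := ![-1, x / rad x y, y / rad x y]

lemma pdi_eq_ZExt (f : F3) (i : Fin 3) (t x y : ℝ) :
    pdi i f t x y = ZExt i f t x y - nullCov x y i * pdi 0 f t x y := by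
  fin_cases i <;> simp [pdi, ZExt, nullCov, Z1, Z2]

lemma abs_ZExt_le (f : F3) (t x y M : ℝ) (hM : ∀ i : Fin 2, |Zi i f t x y| ≤ M) (i : Fin 3) :
    |ZExt i f t x y| ≤ M := by
  fin_cases i
  · simpa [ZExt] using (abs_nonneg _).trans (hM 0)
  · simpa [ZExt, Zi] using hM 0
  · simpa [ZExt, Zi] using hM 1

lemma abs_nullCov_le (x y : ℝ) (i : Fin 3) : |nullCov x y i| ≤ 1 := by
  have hx : |x| ≤ rad x y := Real.abs_le_sqrt (by nlinarith [sq_nonneg y])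
  have hy : |y| ≤ rad x y := Real.abs_le_sqrt (by nlinarith [sq_nonneg x])
  have hr : 0 ≤ rad x y := Real.sqrt_nonneg _
  fin_cases i
  · simp [nullCov]
  · simpa [nullCov, abs_div, abs_of_nonneg hr] using div_le_one_of_le₀ hx hr
  · simpa [nullCov, abs_div, abs_of_nonneg hr] using div_le_one_of_le₀ hy hr

lemma nullCov_null (x y : ℝ) (hxy : (x, y) ≠ ((0 : ℝ), (0 : ℝ))) :
    (nullCov x y 0) ^ 2 = (nullCov x y 1) ^ 2 + (nullCov x y 2) ^ 2 := by
  have hpos : 0 < x ^ 2 + y ^ 2 := by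
    by_contra hcon
    have hx : x = 0 := by nlinarith [sq_nonneg x, sq_nonneg y]
    have hy : y = 0 := by nlinarith [sq_nonneg x, sq_nonneg y]
    exact hxy (by rw [hx, hy])
  have hr2 : rad x y ^ 2 = x ^ 2 + y ^ 2 := Real.sq_sqrt hpos.le
  simp only [nullCov, Matrix.cons_val_zero, Matrix.cons_val_one, Matrix.cons_val, div_pow, hr2]
  field_simp

/-- **Second null condition pointwise estimate** (Lemma 3.2, (3.5)): if the quartic form
`Σ g_{ij}^{kl} p_i p_j p_k p_l` vanishes on the null cone, then
`|Σ g_{ij}^{kl} ∂_i f ∂_j g ∂²_{kl} h| ≤ C(|∂f||∂g||Z∂h| + |∂f||Zg||∂²h| + |Zf||∂g||∂²h|)`. -/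
theorem null_form_estimate_quartic (g : Fin 3 → Fin 3 → Fin 3 → Fin 3 → ℝ)
    (hsym1 : ∀ i j k l, g i j k l = g i j l k)
    (hsym2 : ∀ i j k l, g i j k l = g j i k l)
    (hnull : ∀ p : Fin 3 → ℝ, (p 0) ^ 2 = (p 1) ^ 2 + (p 2) ^ 2 →
      ∑ i, ∑ j, ∑ k, ∑ l, g i j k l * p i * p j * p k * p l = 0) :
    ∃ C > 0, ∀ T : ℝ, 0 < T → ∀ f h k : F3, Smooth3 f → Smooth3 h → Smooth3 k →
      ∀ t x y : ℝ, t ∈ Icc (0 : ℝ) T → (x, y) ≠ ((0 : ℝ), (0 : ℝ)) →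
        |∑ i, ∑ j, ∑ k', ∑ l,
            g i j k' l * pdi i f t x y * pdi j h t x y * pdi k' (pdi l k) t x y| ≤
          C * ((⨆ i : Fin 3, |pdi i f t x y|) * (⨆ i : Fin 3, |pdi i h t x y|) *
                (⨆ p : Fin 2 × Fin 3, |Zi p.1 (pdi p.2 k) t x y|)
            + (⨆ i : Fin 3, |pdi i f t x y|) * (⨆ i : Fin 2, |Zi i h t x y|) *
                (⨆ p : Fin 3 × Fin 3, |pdi p.1 (pdi p.2 k) t x y|)
            + (⨆ i : Fin 2, |Zi i f t x y|) * (⨆ i : Fin 3, |pdi i h t x y|) *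
                (⨆ p : Fin 3 × Fin 3, |pdi p.1 (pdi p.2 k) t x y|)) := by
  refine ⟨2 * (∑ i, ∑ j, ∑ k, ∑ l, |g i j k l|) + 1, by positivity, ?_⟩
  intro T _ f h k _ _ hk t x y _ hxy
  -- Each supremum is over a finite type, hence bounds its members.
  have bd : ∀ {ι : Type} [Finite ι] (u : ι → ℝ) (i : ι), u i ≤ ⨆ j, u j :=
    fun u i => le_ciSup (Set.finite_range u).bddAbove i
  exact null_algebra g (nullCov x y) (fun i => pdi i f t x y) (fun i => pdi i h t x y)
    (fun i => ZExt i f t x y) (fun i => ZExt i h t x y)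
    (fun i j => pdi i (pdi j k) t x y) (fun i j => ZExt i (pdi j k) t x y) _ _ _ _ _ _
    (abs_nullCov_le x y) (hnull _ (nullCov_null x y hxy))
    (fun i => pdi_eq_ZExt f i t x y) (fun i => pdi_eq_ZExt h i t x y)
    (fun i j => pdi_eq_ZExt (pdi j k) i t x y) (fun i j => pdi_comm k hk i j t x y)
    (bd fun i : Fin 3 => |pdi i f t x y|) (bd fun i : Fin 3 => |pdi i h t x y|)
    (fun i j => bd (fun p : Fin 3 × Fin 3 => |pdi p.1 (pdi p.2 k) t x y|) (i, j))
    (abs_ZExt_le f t x y _ (bd fun i : Fin 2 => |Zi i f t x y|))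
    (abs_ZExt_le h t x y _ (bd fun i : Fin 2 => |Zi i h t x y|))
    (fun i j => abs_ZExt_le (pdi j k) t x y _
      (fun a => bd (fun p : Fin 2 × Fin 3 => |Zi p.1 (pdi p.2 k) t x y|) (a, j)) i)

end
end

section
/- Fix M > 0. There exists a constant C > 0, independent of t, such that for every f ∈ C¹([0,∞)×ℝ²) with supp f(t,·) ⊂ {x : |x| ≤ M + t} for each t, and every t ≥ 0: ‖σ₋(t,·)^{−1} f(t,·)‖_{L²({|x| ≥ M+1})} ≤ C ‖∇_x f(t,·)‖_{L²({|x| ≥ M+1})}. -/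
/-!
On `|x| ≤ R := M + t` the weight `σ₋ = 1 + |t - |x||` satisfies `s := R + 1 - |x| ≤ (M + 1) σ₋`, so it
suffices to prove the inequality with `s⁻¹` in place of `σ₋⁻¹`. In polar coordinates this is a
one-dimensional Hardy inequality on each ray: as `(1/s)' = 1/s²` in the radial variable `r`,

  `(u² r / s)' = 2 u u' r / s + u² / s + u² r / s² ≥ u² r / (2 s²) - 2 u'² r`,

and integrating over `[a, R]` with `u R = 0` gives `∫ u² r / s² ≤ 4 ∫ u'² r`, the boundary term at
`a = M + 1` having the favourable sign (`radial_hardy`). Integration over the angle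
(`integral_regOut_nonneg`) gives the theorem with `C = 2 (M + 1)`.
-/

noncomputable section

open Real MeasureTheory Set

set_option linter.unusedVariables false

/-- The `L²(ℝ²)` norm. -/
def L2n (g : ℝ → ℝ → ℝ) : ℝ := Real.sqrt (∫ q : ℝ × ℝ, (g q.1 q.2) ^ 2)

/-- The `L²` norm over a region `S ⊆ ℝ²`. -/
def L2nS (S : Set (ℝ × ℝ)) (g : ℝ → ℝ → ℝ) : ℝ := Real.sqrt (∫ q in S, (g q.1 q.2) ^ 2)

/-- The exterior region `{x : |x| ≥ M + 1}`. -/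
def regOut (M : ℝ) : Set (ℝ × ℝ) := {q | M + 1 ≤ rad q.1 q.2}

/-- One-dimensional Hardy inequality with measure `r dr` and a weight based at the endpoint `R`,
where `u` vanishes; nothing is assumed of `u` at `a`. -/
lemma radial_hardy {u u' : ℝ → ℝ} {a R : ℝ} (ha : 0 ≤ a) (haR : a ≤ R)
    (hu : ∀ r, HasDerivAt u (u' r) r) (hu' : Continuous u') (hR : u R = 0) :
    0 ≤ ∫ r in a..R, r * (4 * u' r ^ 2 - u r ^ 2 / (R + 1 - r) ^ 2) := by
  have hs : ∀ r ∈ Icc a R, 0 < R + 1 - r := fun r hr => by linarith [hr.2]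
  have hcu : Continuous u := continuous_iff_continuousAt.2 fun r => (hu r).continuousAt
  have hd : ∀ r ∈ Icc a R, HasDerivAt (fun r => -2 * (u r ^ 2 * r / (R + 1 - r)))
      (-2 * ((2 * u r * u' r * r + u r ^ 2) / (R + 1 - r)
        + u r ^ 2 * r / (R + 1 - r) ^ 2)) r := by
    intro r hr
    have h0 := (hs r hr).ne'
    have h1 : HasDerivAt (fun r => R + 1 - r) (-1) r := by
      simpa using (hasDerivAt_id r).const_sub (R + 1)
    refine ((((hu r).pow 2).mul (hasDerivAt_id r)).div h1 h0 |>.const_mul (-2)).congr_deriv ?_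
    simp only [Pi.mul_apply, Pi.pow_apply, id]
    push_cast
    field_simp
    ring
  have hne : ∀ r ∈ Icc a R, (R + 1 - r) ^ 2 ≠ 0 := fun r hr => (pow_pos (hs r hr) 2).ne'
  have hc1 : ContinuousOn (fun r => -2 * ((2 * u r * u' r * r + u r ^ 2) / (R + 1 - r)
        + u r ^ 2 * r / (R + 1 - r) ^ 2)) (Icc a R) :=
    continuousOn_const.mul <|
      (ContinuousOn.div (by fun_prop) (by fun_prop) fun r hr => (hs r hr).ne').add
        (ContinuousOn.div (by fun_prop) (by fun_prop) hne)
  have hc2 : ContinuousOn (fun r => r * (4 * u' r ^ 2 - u r ^ 2 / (R + 1 - r) ^ 2)) (Icc a R) :=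
    continuousOn_id.mul <| ContinuousOn.sub (by fun_prop)
      (ContinuousOn.div (by fun_prop) (by fun_prop) hne)
  have hi1 := hc1.intervalIntegrable_of_Icc (μ := volume) haR
  have hi2 := hc2.intervalIntegrable_of_Icc (μ := volume) haR
  have hftc := intervalIntegral.integral_eq_sub_of_hasDerivAt
    (fun r hr => hd r (by rwa [uIcc_of_le haR] at hr)) hi1
  have hmono := intervalIntegral.integral_mono_on haR hi1 hi2 (fun r hr => by
    have hs' := hs r hr
    have hr0 : 0 ≤ r := ha.trans hr.1
    -- the difference of the two sides is `r (2 u' + u / s)² + 2 u² / s`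
    have key : r * (4 * u' r ^ 2 - u r ^ 2 / (R + 1 - r) ^ 2)
        - (-2 * ((2 * u r * u' r * r + u r ^ 2) / (R + 1 - r) + u r ^ 2 * r / (R + 1 - r) ^ 2))
        = r * (2 * u' r + u r / (R + 1 - r)) ^ 2 + 2 * (u r ^ 2 / (R + 1 - r)) := by
      field_simp
      ring
    have : 0 ≤ r * (2 * u' r + u r / (R + 1 - r)) ^ 2 + 2 * (u r ^ 2 / (R + 1 - r)) := by
      positivity
    linarith)
  have ha' : 0 ≤ u a ^ 2 * a / (R + 1 - a) :=
    div_nonneg (by positivity) (hs a ⟨le_rfl, haR⟩).le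
  rw [hftc, hR] at hmono
  simp only [ne_eq, OfNat.ofNat_ne_zero, not_false_eq_true, zero_pow, zero_mul, zero_div,
    mul_zero] at hmono
  linarith

lemma rad_polar {r : ℝ} (hr : 0 ≤ r) (θ : ℝ) : rad (r * cos θ) (r * sin θ) = r := by
  have : (r * cos θ) ^ 2 + (r * sin θ) ^ 2 = r ^ 2 := by
    linear_combination r ^ 2 * Real.sin_sq_add_cos_sq θ
  rw [rad, this, Real.sqrt_sq hr]

lemma continuous_rad : Continuous fun q : ℝ × ℝ => rad q.1 q.2 := by
  unfold rad; fun_prop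

/-- Reduction of an inequality on `{|x| ≥ M + 1}` to inequalities on rays. -/
lemma integral_regOut_nonneg {M R : ℝ} (hM : 0 < M) {H : ℝ × ℝ → ℝ} (hH : Continuous H)
    (hsupp : ∀ q : ℝ × ℝ, R < rad q.1 q.2 → H q = 0)
    (hray : M + 1 ≤ R → ∀ θ : ℝ, 0 ≤ ∫ r in (M + 1)..R, r * H (r * cos θ, r * sin θ)) :
    0 ≤ ∫ q in regOut M, H q := by
  have hmeas : MeasurableSet (regOut M) :=
    (isClosed_le continuous_const continuous_rad).measurableSet
  have hrect : MeasurableSet (Icc (M + 1) R ×ˢ Ioo (-π) π) :=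
    measurableSet_Icc.prod measurableSet_Ioo
  rw [← integral_indicator hmeas, ← integral_comp_polarCoord_symm]
  have hcongr : ∀ p ∈ polarCoord.target,
      p.1 • (regOut M).indicator H (polarCoord.symm p)
        = (Icc (M + 1) R ×ˢ Ioo (-π) π).indicator
            (fun p : ℝ × ℝ => p.1 * H (p.1 * cos p.2, p.1 * sin p.2)) p := by
    rintro ⟨r, θ⟩ ⟨hr, hθ⟩
    have hr' : (0 : ℝ) < r := hr
    have hrad := rad_polar hr'.le θ
    have hs := hsupp (r * cos θ, r * sin θ)
    simp only [hrad] at hs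
    by_cases h1 : M + 1 ≤ r
    · by_cases h2 : r ≤ R
      · rw [indicator_of_mem (show (r, θ) ∈ Icc (M + 1) R ×ˢ Ioo (-π) π from ⟨⟨h1, h2⟩, hθ⟩),
          indicator_of_mem]
        · simp
        · simpa [regOut, hrad] using h1
      · rw [indicator_of_notMem (s := Icc (M + 1) R ×ˢ Ioo (-π) π) (fun h => h2 h.1.2), indicator_of_mem]
        · simp [hs (not_le.1 h2)]
        · simpa [regOut, hrad] using h1
    · rw [indicator_of_notMem (s := Icc (M + 1) R ×ˢ Ioo (-π) π) (fun h => h1 h.1.1), indicator_of_notMem, smul_zero]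
      simpa [regOut, hrad] using h1
  have htarget : polarCoord.target ∩ Icc (M + 1) R ×ˢ Ioo (-π) π = Icc (M + 1) R ×ˢ Ioo (-π) π :=
    inter_eq_right.2 fun p hp => ⟨show (0 : ℝ) < p.1 by linarith [hp.1.1], hp.2⟩
  rw [setIntegral_congr_fun polarCoord.open_target.measurableSet hcongr,
    setIntegral_indicator hrect, htarget]
  have hcont : Continuous fun p : ℝ × ℝ => p.1 * H (p.1 * cos p.2, p.1 * sin p.2) := by fun_prop
  have hint : IntegrableOn (fun p : ℝ × ℝ => p.1 * H (p.1 * cos p.2, p.1 * sin p.2))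
      (Icc (M + 1) R ×ˢ Ioo (-π) π) volume :=
    (hcont.continuousOn.integrableOn_compact (isCompact_Icc.prod isCompact_Icc)).mono_set
      (prod_mono le_rfl Ioo_subset_Icc_self)
  rw [IntegrableOn, Measure.volume_eq_prod, ← Measure.prod_restrict] at hint
  rw [Measure.volume_eq_prod, ← Measure.prod_restrict, integral_prod_symm _ hint]
  refine integral_nonneg fun θ => ?_
  by_cases haR : M + 1 ≤ R
  · have := hray haR θ
    rwa [intervalIntegral.integral_of_le haR, ← integral_Icc_eq_integral_Ioc] at this
  · simp [Icc_eq_empty haR]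

/-- **Weighted Hardy-type inequality in the exterior region** (Lemma 3.3):
`‖σ₋^{−1} f(t,·)‖_{L²(|x|≥M+1)} ≤ C‖∇f(t,·)‖_{L²(|x|≥M+1)}` for compactly supported `f`. -/
theorem weighted_hardy_exterior (M : ℝ) (hM : 0 < M) :
    ∃ C > 0, ∀ f : F3,
      ContDiff ℝ 1 (fun p : ℝ × ℝ × ℝ => f p.1 p.2.1 p.2.2) →
      (∀ t x y, 0 ≤ t → M + t ≤ rad x y → f t x y = 0) →
      ∀ t : ℝ, 0 ≤ t →
        L2nS (regOut M) (fun x y => f t x y / sm t x y)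
          ≤ C * L2nS (regOut M)
              (fun x y => Real.sqrt ((px f t x y) ^ 2 + (py f t x y) ^ 2)) := by
  refine ⟨2 * (M + 1), by positivity, fun f hf hsupp t ht => ?_⟩
  set g : ℝ × ℝ → ℝ := fun q => f t q.1 q.2 with hg
  have hgC : ContDiff ℝ 1 g := hf.comp (contDiff_const.prodMk contDiff_id)
  have hgd : ∀ q, HasFDerivAt g (fderiv ℝ g q) q := fun q =>
    (hgC.differentiable one_ne_zero q).hasFDerivAt
  have hgc : Continuous g := hgC.continuous
  have hDc : Continuous (fderiv ℝ g) := hgC.continuous_fderiv one_ne_zero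
  have hpx : ∀ x y, px f t x y = fderiv ℝ g (x, y) (1, 0) := fun x y =>
    (HasFDerivAt.comp_hasDerivAt (l := g) (f := fun s => (s, y)) x (hgd (x, y))
      ((hasDerivAt_id x).prodMk (hasDerivAt_const x y))).deriv
  have hpy : ∀ x y, py f t x y = fderiv ℝ g (x, y) (0, 1) := fun x y =>
    (HasFDerivAt.comp_hasDerivAt (l := g) (f := fun s => (x, s)) y (hgd (x, y))
      ((hasDerivAt_const y x).prodMk (hasDerivAt_id y))).deriv
  set F : ℝ × ℝ → ℝ := fun q => (g q / sm t q.1 q.2) ^ 2 with hF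
  set G : ℝ × ℝ → ℝ := fun q => fderiv ℝ g q (1, 0) ^ 2 + fderiv ℝ g q (0, 1) ^ 2 with hG
  have hsm : ∀ x y, 0 < sm t x y := fun x y => by unfold sm; positivity
  have hFc : Continuous F := by
    refine (hgc.div ?_ fun q => (hsm q.1 q.2).ne').pow 2
    unfold sm
    exact continuous_const.add (continuous_const.sub continuous_rad).abs
  have hGc : Continuous G := by fun_prop
  have hts : tsupport g ⊆ {q | rad q.1 q.2 ≤ M + t} := by
    refine closure_minimal (fun q hq => ?_) (isClosed_le continuous_rad continuous_const)
    by_contra h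
    exact hq (hsupp t q.1 q.2 ht (not_le.1 h).le)
  have hF0 : ∀ q : ℝ × ℝ, M + t < rad q.1 q.2 → F q = 0 := fun q hq => by
    simp [hF, hg, hsupp t q.1 q.2 ht hq.le]
  have hG0 : ∀ q : ℝ × ℝ, M + t < rad q.1 q.2 → G q = 0 := fun q hq => by
    have : fderiv ℝ g q = 0 := fderiv_of_notMem_tsupport _ fun h => not_le.2 hq (hts h)
    simp [hG, this]
  have hcs : ∀ K : ℝ × ℝ → ℝ, (∀ q : ℝ × ℝ, M + t < rad q.1 q.2 → K q = 0) →
      HasCompactSupport K := fun K hK => by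
    refine HasCompactSupport.intro (isCompact_closedBall (0 : ℝ × ℝ) (M + t)) fun q hq => hK q ?_
    rw [Metric.mem_closedBall, dist_zero_right, Prod.norm_def, sup_le_iff, not_and_or,
      not_le, not_le] at hq
    rcases hq with hq | hq
    · exact hq.trans_le (Real.abs_le_sqrt (by nlinarith [sq_nonneg q.2]))
    · exact hq.trans_le (Real.abs_le_sqrt (by nlinarith [sq_nonneg q.1]))
  have hFi : Integrable F := hFc.integrable_of_hasCompactSupport (hcs F hF0)
  have hGi : Integrable G := hGc.integrable_of_hasCompactSupport (hcs G hG0)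
  have hmain : 0 ≤ ∫ q in regOut M, ((2 * (M + 1)) ^ 2 * G q - F q) := by
    refine integral_regOut_nonneg (R := M + t) hM (by fun_prop)
      (fun q hq => by rw [hF0 q hq, hG0 q hq]; ring) fun haR θ => ?_
    have hu : ∀ r, HasDerivAt (fun r => g (r * cos θ, r * sin θ))
        (fderiv ℝ g (r * cos θ, r * sin θ) (cos θ, sin θ)) r := fun r => by
      have h1 : HasDerivAt (fun r : ℝ => r * cos θ) (cos θ) r := by
        simpa using (hasDerivAt_id r).mul_const (cos θ)
      have h2 : HasDerivAt (fun r : ℝ => r * sin θ) (sin θ) r := by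
        simpa using (hasDerivAt_id r).mul_const (sin θ)
      exact (hgd _).comp_hasDerivAt r (h1.prodMk h2)
    have huR : g ((M + t) * cos θ, (M + t) * sin θ) = 0 :=
      hsupp t _ _ ht (rad_polar (by positivity) θ).ge
    have hhardy := radial_hardy (by positivity : (0 : ℝ) ≤ M + 1) haR hu (by fun_prop) huR
    have hcH : Continuous fun r => r * ((2 * (M + 1)) ^ 2 * G (r * cos θ, r * sin θ)
        - F (r * cos θ, r * sin θ)) := by fun_prop
    have hci : ContinuousOn (fun r => (M + 1) ^ 2 *
        (r * (4 * fderiv ℝ g (r * cos θ, r * sin θ) (cos θ, sin θ) ^ 2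
          - g (r * cos θ, r * sin θ) ^ 2 / (M + t + 1 - r) ^ 2))) (Icc (M + 1) (M + t)) :=
      continuousOn_const.mul <| continuousOn_id.mul <| ContinuousOn.sub (by fun_prop)
        (ContinuousOn.div (by fun_prop) (by fun_prop) fun r hr =>
          (pow_pos (by linarith [hr.2] : 0 < M + t + 1 - r) 2).ne')
    refine le_trans ?_ (intervalIntegral.integral_mono_on haR
      (hci.intervalIntegrable_of_Icc haR) (hcH.intervalIntegrable _ _) fun r hr => ?_)
    · rw [intervalIntegral.integral_const_mul]
      positivity
    · have hr0 : 0 ≤ r := by linarith [hr.1]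
      have hs : 0 < M + t + 1 - r := by linarith [hr.2]
      set q : ℝ × ℝ := (r * cos θ, r * sin θ) with hq
      -- the radial derivative is bounded by the gradient
      have hgrad : fderiv ℝ g q (cos θ, sin θ) ^ 2 ≤ G q := by
        have hlin : fderiv ℝ g q (cos θ, sin θ)
            = cos θ * fderiv ℝ g q (1, 0) + sin θ * fderiv ℝ g q (0, 1) := by
          rw [← smul_eq_mul, ← smul_eq_mul, ← map_smul, ← map_smul, ← map_add]
          simp
        rw [hlin, hG]
        nlinarith [sq_nonneg (cos θ * fderiv ℝ g q (0, 1) - sin θ * fderiv ℝ g q (1, 0)),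
          Real.sin_sq_add_cos_sq θ]
      have hweight : F q ≤ (M + 1) ^ 2 * (g q ^ 2 / (M + t + 1 - r) ^ 2) := by
        have hsmq : sm t q.1 q.2 = 1 + |t - r| := by
          simp only [sm, hq, rad_polar hr0]
        have hle : M + t + 1 - r ≤ (M + 1) * (1 + |t - r|) := by
          nlinarith [le_abs_self (t - r), abs_nonneg (t - r)]
        simp only [hF, hsmq]
        rw [div_pow, ← mul_div_assoc, div_le_div_iff₀ (by positivity) (by positivity)]
        nlinarith [mul_le_mul_of_nonneg_left (pow_le_pow_left₀ hs.le hle 2) (sq_nonneg (g q))]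
      have hM2 := mul_le_mul_of_nonneg_left hgrad (sq_nonneg (M + 1))
      nlinarith [mul_le_mul_of_nonneg_left hM2 hr0, mul_le_mul_of_nonneg_left hweight hr0]
  rw [integral_sub (hGi.integrableOn.const_mul _) hFi.integrableOn, integral_const_mul] at hmain
  have hR : L2nS (regOut M) (fun x y => Real.sqrt ((px f t x y) ^ 2 + (py f t x y) ^ 2))
      = Real.sqrt (∫ q in regOut M, G q) := by
    unfold L2nS
    congr 2
    funext q
    rw [Real.sq_sqrt (by positivity), hpx, hpy]
  rw [hR, ← Real.sqrt_sq (by positivity : (0 : ℝ) ≤ 2 * (M + 1)), ← Real.sqrt_mul (sq_nonneg _)]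
  exact Real.sqrt_le_sqrt (by linarith : ∫ q in regOut M, F q ≤ _)

end
end

section
/- Fix M > 0. There exists a constant C > 0, independent of t, such that for every g ∈ C²([0,∞)×ℝ²) with supp g(t,·) ⊂ {x : |x| ≤ M + t} for each t, every t ≥ 0, and every x with |x| ≥ M+1: σ(x)^{1/2} |g(t,x)| ≤ C Σ_{j=0}^{1} Σ_{|α|=0}^{2−j} ‖∇^α Ω^j g(t,·)‖_{L²({|x| ≥ M+1})}. -/
/-!
At a fixed time, write `φ = g(t,·)`; it is `C²` and compactly supported. In polar coordinates
`(ρ, θ)` the field `Ω` is `∂_θ`, so the one-dimensional Sobolev inequality in `θ`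
(`sq_le_integral_angle`) bounds `φ(x)²` by the integral of `φ² + (Ωφ)²` over the circle of radius
`r = |x|`. On each ray, integrating `∂_ρ(φ²) = 2φ ∂_ρφ` from `r` outwards to where `φ` vanishes and
using `r ≤ ρ` gives `r φ(r,θ)² ≤ ∫_r^∞ (φ² + |∇φ|²) ρ dρ` (`ray_estimate`); `ρ dρ dθ` is the area
element, and the region reached stays in `{|x| ≥ M + 1}` (`circle_estimate`). Applying this to
both `φ` and `Ωφ` yields
`r φ(x)² ≤ 2 (‖φ‖² + ‖∇φ‖² + ‖Ωφ‖² + ‖∇Ωφ‖²)` over the exterior region (`pointwise_sq`).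
Since `r ≥ 1`, one has `1 + r ≤ 2r`, and the claim holds with `C = 2`.
-/

noncomputable section

open Real MeasureTheory Set

set_option linter.unusedVariables false

/-- The spatial derivatives `∇ = (∂₁, ∂₂)`. -/
def spi : Fin 2 → F3 → F3 := ![px, py]

/-- Iterated spatial derivative `∇^α`. -/
def SIter : List (Fin 2) → F3 → F3
  | [], f => f
  | a :: l, f => spi a (SIter l f)

/-! ### The Sobolev inequality on an interval of angles -/

/-- One-dimensional Sobolev inequality on `[-π, π]`: a point value is compared with the value at
every other point by integrating the derivative of `h²`, and the result is averaged. -/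
lemma sq_le_integral_angle (h h' : ℝ → ℝ) (hd : ∀ s, HasDerivAt h (h' s) s)
    (hc : Continuous h') (θ : ℝ) (hθ : θ ∈ Icc (-π) π) :
    h θ ^ 2 ≤ 2 * ∫ s in (-π)..π, (h s ^ 2 + h' s ^ 2) := by
  have hch : Continuous h := continuous_iff_continuousAt.2 fun s => (hd s).continuousAt
  have hπ := Real.pi_pos
  set I := ∫ s in (-π)..π, (h s ^ 2 + h' s ^ 2) with hI
  have hint : ∀ a b : ℝ, IntervalIntegrable (fun s => h s ^ 2 + h' s ^ 2) volume a b :=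
    fun a b => (by fun_prop : Continuous _).intervalIntegrable a b
  have key : ∀ s ∈ Icc (-π) π, h θ ^ 2 ≤ h s ^ 2 + I := by
    intro s hs
    have h1 : ∫ u in s..θ, 2 * h u * h' u = h θ ^ 2 - h s ^ 2 := by
      apply intervalIntegral.integral_eq_sub_of_hasDerivAt
      · intro u _
        exact ((hd u).pow 2).congr_deriv (by norm_num)
      · exact (by fun_prop : Continuous _).intervalIntegrable _ _
    have h2 : |∫ u in s..θ, 2 * h u * h' u| ≤ |∫ u in s..θ, (h u ^ 2 + h' u ^ 2)| := by
      have := intervalIntegral.norm_integral_le_abs_of_norm_le (a := s) (b := θ) (μ := volume)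
        (f := fun u => 2 * h u * h' u) (g := fun u => h u ^ 2 + h' u ^ 2)
        (Filter.Eventually.of_forall fun u => ?_) (hint _ _)
      · simpa using this
      · rw [Real.norm_eq_abs, abs_le]
        constructor <;> nlinarith [sq_nonneg (h u + h' u), sq_nonneg (h u - h' u)]
    have h3 : |∫ u in s..θ, (h u ^ 2 + h' u ^ 2)| ≤ I := by
      have h4 : |∫ u in s..θ, (h u ^ 2 + h' u ^ 2)| ≤ |I| := by
        apply intervalIntegral.abs_integral_mono_interval
        · rw [uIoc_of_le (by linarith : -π ≤ π)]
          intro u hu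
          rw [mem_uIoc] at hu
          rcases hu with hu | hu <;> constructor <;> linarith [hu.1, hu.2, hs.1, hs.2, hθ.1, hθ.2]
        · exact Filter.Eventually.of_forall fun u => by positivity
        · exact hint _ _
      rwa [abs_of_nonneg (a := I)
        (intervalIntegral.integral_nonneg (by linarith) fun u _ => by positivity)] at h4
    have := le_abs_self (∫ u in s..θ, 2 * h u * h' u)
    linarith
  have h5 : ∫ _ in (-π)..π, h θ ^ 2 ≤ ∫ s in (-π)..π, (h s ^ 2 + I) := by
    apply intervalIntegral.integral_mono_on (by linarith)
    · simp
    · exact (by fun_prop : Continuous _).intervalIntegrable _ _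
    · exact key
  have h6 : ∫ s in (-π)..π, h s ^ 2 ≤ I := by
    apply intervalIntegral.integral_mono_on (by linarith)
    · exact (by fun_prop : Continuous _).intervalIntegrable _ _
    · exact hint _ _
    · intro s _
      nlinarith [sq_nonneg (h' s)]
  rw [intervalIntegral.integral_add ((by fun_prop : Continuous _).intervalIntegrable _ _) (by simp),
    intervalIntegral.integral_const, intervalIntegral.integral_const, smul_eq_mul, smul_eq_mul] at h5
  have hI0 : 0 ≤ I := intervalIntegral.integral_nonneg (by linarith) fun u _ => by positivity
  have hπ3 := Real.pi_gt_three
  -- `2π h(θ)² ≤ (1 + 2π) I` and `2π ≥ 1`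
  nlinarith

/-! ### The radial estimate -/

/-- The first-order energy density `φ² + |∇φ|²`. -/
def energy (φ : ℝ × ℝ → ℝ) (q : ℝ × ℝ) : ℝ :=
  φ q ^ 2 + (fderiv ℝ φ q (1, 0)) ^ 2 + (fderiv ℝ φ q (0, 1)) ^ 2

lemma energy_nonneg (φ : ℝ × ℝ → ℝ) (q : ℝ × ℝ) : 0 ≤ energy φ q := by
  unfold energy
  positivity

lemma continuous_energy {φ : ℝ × ℝ → ℝ} (hφ : ContDiff ℝ 1 φ) : Continuous (energy φ) := by
  have h1 := hφ.continuous
  have h2 := hφ.continuous_fderiv (by norm_num)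
  unfold energy
  fun_prop

lemma integrable_sq_of_compact {f : ℝ × ℝ → ℝ} (hf : Continuous f) (hc : HasCompactSupport f) :
    Integrable (fun q => f q ^ 2) := by
  have h1 : HasCompactSupport fun q => f q ^ 2 :=
    hc.mono fun q hq h0 => hq (by simp [h0])
  have h2 : Continuous fun q => f q ^ 2 := hf.pow 2
  exact h2.integrable_of_hasCompactSupport h1

lemma fderiv_apply_pair (φ : ℝ × ℝ → ℝ) (q : ℝ × ℝ) (a b : ℝ) :
    fderiv ℝ φ q (a, b) = a * fderiv ℝ φ q (1, 0) + b * fderiv ℝ φ q (0, 1) := by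
  have : ((a, b) : ℝ × ℝ) = a • (1, 0) + b • (0, 1) := by simp
  rw [this, map_add, map_smul, map_smul, smul_eq_mul, smul_eq_mul]

/-- Along a ray, `r φ(r)² ≤ ∫ 2|φ ∂ᵣφ| ρ dρ`, since `r ≤ ρ` on the range of integration and `φ`
vanishes at the outer end. -/
lemma ray_estimate {φ : ℝ × ℝ → ℝ} (hφ : ContDiff ℝ 1 φ) {r R : ℝ} (hr : 0 ≤ r) (hrR : r ≤ R)
    (θ : ℝ) (h0 : φ (R * cos θ, R * sin θ) = 0) :
    r * φ (r * cos θ, r * sin θ) ^ 2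
      ≤ ∫ ρ in r..R, ρ * energy φ (ρ * cos θ, ρ * sin θ) := by
  have hc := hφ.continuous
  have hc' := hφ.continuous_fderiv (by norm_num)
  have hce := continuous_energy hφ
  set D : ℝ → ℝ := fun ρ => fderiv ℝ φ (ρ * cos θ, ρ * sin θ) (cos θ, sin θ) with hD
  have hDc : Continuous D := by
    rw [hD]
    fun_prop
  have hder : ∀ ρ, HasDerivAt (fun ρ => φ (ρ * cos θ, ρ * sin θ)) (D ρ) ρ := by
    intro ρ
    have hp : HasDerivAt (fun ρ : ℝ => (ρ * cos θ, ρ * sin θ)) (cos θ, sin θ) ρ :=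
      (hasDerivAt_mul_const _).prodMk (hasDerivAt_mul_const _)
    exact ((hφ.differentiable (by norm_num)) (ρ * cos θ, ρ * sin θ)).hasFDerivAt.comp_hasDerivAt
      ρ hp
  have h1 : ∫ ρ in r..R, 2 * φ (ρ * cos θ, ρ * sin θ) * D ρ
      = φ (R * cos θ, R * sin θ) ^ 2 - φ (r * cos θ, r * sin θ) ^ 2 := by
    apply intervalIntegral.integral_eq_sub_of_hasDerivAt
      (f := fun ρ => φ (ρ * cos θ, ρ * sin θ) ^ 2)
    · intro u _
      exact ((hder u).pow 2).congr_deriv (by norm_num)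
    · exact (by fun_prop : Continuous _).intervalIntegrable _ _
  have h2 : r * φ (r * cos θ, r * sin θ) ^ 2
      = ∫ ρ in r..R, -r * (2 * φ (ρ * cos θ, ρ * sin θ) * D ρ) := by
    rw [intervalIntegral.integral_const_mul, h1, h0]
    ring
  rw [h2]
  apply intervalIntegral.integral_mono_on hrR
  · exact (by fun_prop : Continuous _).intervalIntegrable _ _
  · exact (by fun_prop : Continuous _).intervalIntegrable _ _
  · intro ρ hρ
    have hle : -(2 * φ (ρ * cos θ, ρ * sin θ) * D ρ)
        ≤ energy φ (ρ * cos θ, ρ * sin θ) := by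
      have hDD : D ρ = cos θ * fderiv ℝ φ (ρ * cos θ, ρ * sin θ) (1, 0)
          + sin θ * fderiv ℝ φ (ρ * cos θ, ρ * sin θ) (0, 1) := fderiv_apply_pair _ _ _ _
      unfold energy
      generalize fderiv ℝ φ (ρ * cos θ, ρ * sin θ) (1, 0) = a at *
      generalize fderiv ℝ φ (ρ * cos θ, ρ * sin θ) (0, 1) = b at *
      -- Cauchy–Schwarz for the radial derivative
      have hCS : D ρ ^ 2 ≤ a ^ 2 + b ^ 2 := by
        have e : a ^ 2 + b ^ 2 = D ρ ^ 2 + (sin θ * a - cos θ * b) ^ 2 := by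
          rw [hDD]
          linear_combination (-a ^ 2 - b ^ 2) * (sin_sq_add_cos_sq θ)
        rw [e]
        nlinarith [sq_nonneg (sin θ * a - cos θ * b)]
      nlinarith [sq_nonneg (φ (ρ * cos θ, ρ * sin θ) + D ρ)]
    have hE := energy_nonneg φ (ρ * cos θ, ρ * sin θ)
    nlinarith [hρ.1, mul_le_mul_of_nonneg_left hle hr, mul_le_mul_of_nonneg_right hρ.1 hE]

/-- The polar change of variables on an annular sector contained in the exterior region. -/
lemma sector_integral_le {F : ℝ × ℝ → ℝ} (hF : Continuous F) (hF0 : ∀ q, 0 ≤ F q)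
    (hFi : Integrable F) {M r R : ℝ} (hr0 : 0 < r) (hr : M + 1 ≤ r) (hrR : r ≤ R) :
    ∫ θ in (-π)..π, ∫ ρ in r..R, ρ * F (ρ * cos θ, ρ * sin θ) ≤ ∫ q in regOut M, F q := by
  have hπ := Real.pi_pos
  set D : Set (ℝ × ℝ) := Ioc r R ×ˢ Ioo (-π) π with hD
  have hDm : MeasurableSet D := measurableSet_Ioc.prod measurableSet_Ioo
  have hDt : D ⊆ polarCoord.target := by
    rintro ⟨ρ, θ⟩ ⟨h1, h2⟩
    exact ⟨hr0.trans h1.1, h2⟩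
  have hint : IntegrableOn (fun p : ℝ × ℝ => p.2 * F (p.2 * cos p.1, p.2 * sin p.1))
      (Ioo (-π) π ×ˢ Ioc r R) := by
    refine (Continuous.continuousOn (by fun_prop)).integrableOn_compact
      (isCompact_Icc.prod isCompact_Icc : IsCompact (Icc (-π) π ×ˢ Icc r R)) |>.mono_set ?_
    exact prod_mono Ioo_subset_Icc_self Ioc_subset_Icc_self
  have h1 : ∫ θ in (-π)..π, ∫ ρ in r..R, ρ * F (ρ * cos θ, ρ * sin θ)
      = ∫ p in D, p.1 * F (p.1 * cos p.2, p.1 * sin p.2) := by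
    rw [intervalIntegral.integral_of_le (by linarith), integral_Ioc_eq_integral_Ioo]
    simp_rw [intervalIntegral.integral_of_le hrR]
    have := setIntegral_prod (μ := volume) (ν := volume) _ hint
    rw [← this]
    exact setIntegral_prod_swap (μ := volume) (ν := volume) (Ioc r R) (Ioo (-π) π)
      (fun p : ℝ × ℝ => p.1 * F (p.1 * cos p.2, p.1 * sin p.2))
  have h2 : ∫ p in D, p.1 * F (p.1 * cos p.2, p.1 * sin p.2)
      = ∫ q in polarCoord.symm '' D, F q := by
    rw [integral_image_eq_integral_abs_det_fderiv_smul volume hDm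
      (fun p _ => (hasFDerivAt_polarCoord_symm p).hasFDerivWithinAt)
      (polarCoord.symm.injOn.mono hDt)]
    refine setIntegral_congr_fun hDm fun p hp => ?_
    have : 0 < p.1 := (hDt hp).1
    simp [det_fderivPolarCoordSymm, abs_of_pos this]
  rw [h1, h2]
  refine setIntegral_mono_set hFi.integrableOn (Filter.Eventually.of_forall hF0) ?_
  refine Filter.Eventually.of_forall ?_
  rintro q ⟨⟨ρ, θ⟩, ⟨h3, -⟩, rfl⟩
  change M + 1 ≤ rad (ρ * cos θ) (ρ * sin θ)
  rw [rad_polar (hr0.trans h3.1).le]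
  exact hr.trans h3.1.le

lemma integrable_energy {φ : ℝ × ℝ → ℝ} (hφ : ContDiff ℝ 1 φ) (hs : HasCompactSupport φ) :
    Integrable (energy φ) := by
  have hc' := hφ.continuous_fderiv (by norm_num)
  exact ((integrable_sq_of_compact hφ.continuous hs).add
    (integrable_sq_of_compact (by fun_prop) (hs.fderiv_apply ℝ (1, 0)))).add
    (integrable_sq_of_compact (by fun_prop) (hs.fderiv_apply ℝ (0, 1)))

/-- The mass of `φ²` on a circle of radius `r`, weighted by `r`, is controlled by the exterior
energy. -/
lemma circle_estimate {φ : ℝ × ℝ → ℝ} (hφ : ContDiff ℝ 1 φ) (hs : HasCompactSupport φ)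
    {M r : ℝ} (hr0 : 0 < r) (hr : M + 1 ≤ r) :
    r * ∫ θ in (-π)..π, φ (r * cos θ, r * sin θ) ^ 2 ≤ ∫ q in regOut M, energy φ q := by
  have hc := hφ.continuous
  have hce := continuous_energy hφ
  have hπ := Real.pi_pos
  obtain ⟨B, hB⟩ := hs.isCompact.isBounded.subset_closedBall 0
  -- beyond Euclidean radius `R` the sup norm exceeds `B`
  set R := r + 2 * |B| + 1 with hR
  have hrR : r ≤ R := by
    have := abs_nonneg B
    linarith
  have hvan : ∀ θ, φ (R * cos θ, R * sin θ) = 0 := by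
    intro θ
    by_contra hne
    have hmem := hB (subset_tsupport φ hne)
    rw [mem_closedBall_zero_iff, Prod.norm_def, sup_le_iff, Real.norm_eq_abs, Real.norm_eq_abs]
      at hmem
    have hB' := le_abs_self B
    have e1 := sq_le_sq' (by linarith [neg_abs_le (R * cos θ), hmem.1])
      ((le_abs_self _).trans (hmem.1.trans hB'))
    have e2 := sq_le_sq' (by linarith [neg_abs_le (R * sin θ), hmem.2])
      ((le_abs_self _).trans (hmem.2.trans hB'))
    have e3 : (R * cos θ) ^ 2 + (R * sin θ) ^ 2 = R ^ 2 := by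
      linear_combination R ^ 2 * sin_sq_add_cos_sq θ
    nlinarith [abs_nonneg B]
  refine le_trans ?_ (sector_integral_le hce (energy_nonneg φ) (integrable_energy hφ hs) hr0 hr hrR)
  rw [← intervalIntegral.integral_const_mul]
  apply intervalIntegral.integral_mono_on (by linarith)
  · exact (by fun_prop : Continuous _).intervalIntegrable _ _
  · apply Continuous.intervalIntegrable
    apply intervalIntegral.continuous_parametric_intervalIntegral_of_continuous'
    fun_prop
  · intro θ _
    exact ray_estimate hφ hr0.le hrR θ (hvan θ)

/-- The pointwise bound in squared form; `ψ` plays the role of `Ωφ`, the angular derivative. -/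
lemma pointwise_sq {φ ψ : ℝ × ℝ → ℝ} (hφ : ContDiff ℝ 1 φ) (hs : HasCompactSupport φ)
    (hψ : ContDiff ℝ 1 ψ) (hs' : HasCompactSupport ψ)
    (hΩ : ∀ q, ψ q = q.1 * fderiv ℝ φ q (0, 1) - q.2 * fderiv ℝ φ q (1, 0))
    {M x y : ℝ} (hM : 0 < M) (hr : M + 1 ≤ rad x y) :
    rad x y * φ (x, y) ^ 2
      ≤ 2 * ((∫ q in regOut M, energy φ q) + ∫ q in regOut M, energy ψ q) := by
  set r := rad x y with hrdef
  have hr0 : 0 < r := by linarith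
  set θ := Complex.arg ⟨x, y⟩ with hθ
  have hnorm : ‖(⟨x, y⟩ : ℂ)‖ = r := by
    rw [Complex.norm_def, Complex.normSq_mk, hrdef, rad]
    ring_nf
  have hx : r * cos θ = x := by
    rw [← hnorm, hθ, Complex.norm_mul_cos_arg]
  have hy : r * sin θ = y := by
    rw [← hnorm, hθ, Complex.norm_mul_sin_arg]
  have hd : ∀ s, HasDerivAt (fun s => φ (r * cos s, r * sin s)) (ψ (r * cos s, r * sin s)) s := by
    intro s
    have hp : HasDerivAt (fun s : ℝ => (r * cos s, r * sin s)) (r * -sin s, r * cos s) s :=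
      ((hasDerivAt_cos s).const_mul r).prodMk ((hasDerivAt_sin s).const_mul r)
    have := ((hφ.differentiable (by norm_num))
      (r * cos s, r * sin s)).hasFDerivAt.comp_hasDerivAt s hp
    refine this.congr_deriv ?_
    rw [hΩ, fderiv_apply_pair φ _ (r * -sin s)]
    ring
  have hcφ := hφ.continuous
  have hcψ := hψ.continuous
  have h1 := sq_le_integral_angle (fun s => φ (r * cos s, r * sin s))
    (fun s => ψ (r * cos s, r * sin s)) hd (by fun_prop) θ
    ⟨(Complex.neg_pi_lt_arg _).le, Complex.arg_le_pi _⟩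
  simp only [hx, hy] at h1
  rw [intervalIntegral.integral_add ((by fun_prop : Continuous _).intervalIntegrable _ _)
    ((by fun_prop : Continuous _).intervalIntegrable _ _)] at h1
  have h2 := circle_estimate hφ hs hr0 hr
  have h3 := circle_estimate hψ hs' hr0 hr
  nlinarith [mul_le_mul_of_nonneg_left h1 hr0.le]

/-! ### Translation to the coordinate derivatives -/

lemma px_eq {f : F3} {φ : ℝ × ℝ → ℝ} {t : ℝ} (hf : ∀ u v, f t u v = φ (u, v))
    (hφ : ContDiff ℝ 1 φ) (x y : ℝ) : px f t x y = fderiv ℝ φ (x, y) (1, 0) := by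
  unfold px
  simp only [hf]
  have hp : HasDerivAt (fun s : ℝ => (s, y)) (1, 0) x := (hasDerivAt_id x).prodMk
    (hasDerivAt_const x y)
  exact (((hφ.differentiable (by norm_num)) (x, y)).hasFDerivAt.comp_hasDerivAt x hp).deriv

lemma py_eq {f : F3} {φ : ℝ × ℝ → ℝ} {t : ℝ} (hf : ∀ u v, f t u v = φ (u, v))
    (hφ : ContDiff ℝ 1 φ) (x y : ℝ) : py f t x y = fderiv ℝ φ (x, y) (0, 1) := by
  unfold py
  simp only [hf]
  have hp : HasDerivAt (fun s : ℝ => (x, s)) (0, 1) y := (hasDerivAt_const y x).prodMk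
    (hasDerivAt_id y)
  exact (((hφ.differentiable (by norm_num)) (x, y)).hasFDerivAt.comp_hasDerivAt y hp).deriv

lemma L2nS_sq (S : Set (ℝ × ℝ)) (g : ℝ → ℝ → ℝ) :
    L2nS S g ^ 2 = ∫ q in S, (g q.1 q.2) ^ 2 :=
  Real.sq_sqrt (integral_nonneg fun _ => sq_nonneg _)

lemma L2nS_nonneg (S : Set (ℝ × ℝ)) (g : ℝ → ℝ → ℝ) : 0 ≤ L2nS S g := Real.sqrt_nonneg _

lemma integral_energy_eq {f : F3} {φ : ℝ × ℝ → ℝ} {t : ℝ} (hf : ∀ u v, f t u v = φ (u, v))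
    (hφ : ContDiff ℝ 1 φ) (hs : HasCompactSupport φ) (S : Set (ℝ × ℝ)) :
    ∫ q in S, energy φ q = L2nS S (fun u v => f t u v) ^ 2 + L2nS S (fun u v => px f t u v) ^ 2
      + L2nS S (fun u v => py f t u v) ^ 2 := by
  have hc' := hφ.continuous_fderiv (by norm_num)
  rw [L2nS_sq, L2nS_sq, L2nS_sq]
  simp only [hf, px_eq hf hφ, py_eq hf hφ]
  have h0 := (integrable_sq_of_compact hφ.continuous hs).integrableOn (s := S)
  have h1 := (integrable_sq_of_compact (by fun_prop)
    (hs.fderiv_apply ℝ (1, 0))).integrableOn (s := S)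
  have h2 := (integrable_sq_of_compact (by fun_prop)
    (hs.fderiv_apply ℝ (0, 1))).integrableOn (s := S)
  have h01 := h0.add h1
  rw [← integral_add h0 h1]
  exact integral_add h01 h2

/-- The six norms used by the estimate are among the summands of the right-hand side. -/
lemma norms_le_sum (S : Set (ℝ × ℝ)) (g : F3) (t : ℝ) :
    (L2nS S (fun u v => g t u v) + L2nS S (fun u v => px g t u v)
        + L2nS S (fun u v => py g t u v))
      + (L2nS S (fun u v => Om g t u v) + L2nS S (fun u v => px (Om g) t u v)
        + L2nS S (fun u v => py (Om g) t u v))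
      ≤ ∑ j ∈ Finset.range 2, ∑ a ∈ Finset.range (3 - j),
          ∑ w : Fin a → Fin 2,
            L2nS S (fun u v => SIter (List.ofFn w) ((Om)^[j] g) t u v) := by
  have e0 : ∀ f : F3, ∑ w : Fin 0 → Fin 2, L2nS S (fun u v => SIter (List.ofFn w) f t u v)
      = L2nS S (fun u v => f t u v) := by
    intro f
    simp [SIter]
  have e1 : ∀ f : F3, ∑ w : Fin 1 → Fin 2, L2nS S (fun u v => SIter (List.ofFn w) f t u v)
      = L2nS S (fun u v => px f t u v) + L2nS S (fun u v => py f t u v) := by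
    intro f
    rw [← (Equiv.funUnique (Fin 1) (Fin 2)).symm.sum_comp, Fin.sum_univ_two]
    simp [SIter, spi]
  have e2 : 0 ≤ ∑ w : Fin 2 → Fin 2, L2nS S (fun u v => SIter (List.ofFn w) g t u v) :=
    Finset.sum_nonneg fun _ _ => L2nS_nonneg _ _
  simp only [Finset.sum_range_succ, Finset.sum_range_zero, Nat.sub_zero, Nat.reduceSub,
    Function.iterate_zero, Function.iterate_one, id, e0, e1]
  linarith

/-- **Sobolev-type pointwise estimate in the exterior region** ((3.18)):
`σ^{1/2}|g(t,x)| ≤ C Σ_{j=0}^{1} Σ_{|α|≤2−j} ‖∇^αΩ^j g(t,·)‖_{L²(|x|≥M+1)}`. -/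
theorem pointwise_sobolev_exterior (M : ℝ) (hM : 0 < M) :
    ∃ C > 0, ∀ g : F3,
      ContDiff ℝ 2 (fun p : ℝ × ℝ × ℝ => g p.1 p.2.1 p.2.2) →
      (∀ t x y, 0 ≤ t → M + t ≤ rad x y → g t x y = 0) →
      ∀ t x y : ℝ, 0 ≤ t → M + 1 ≤ rad x y →
        Real.sqrt (1 + rad x y) * |g t x y|
          ≤ C * ∑ j ∈ Finset.range 2, ∑ a ∈ Finset.range (3 - j),
              ∑ w : Fin a → Fin 2,
                L2nS (regOut M) (fun u v => SIter (List.ofFn w) ((Om)^[j] g) t u v) := by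
  refine ⟨2, by norm_num, ?_⟩
  intro g hg hsupp t x y ht hr
  set φ : ℝ × ℝ → ℝ := fun q => g t q.1 q.2 with hφdef
  have hφ2 : ContDiff ℝ 2 φ :=
    hg.comp (by fun_prop : ContDiff ℝ 2 fun q : ℝ × ℝ => (t, q.1, q.2))
  have hφ : ContDiff ℝ 1 φ := hφ2.of_le (by norm_num)
  have hs : HasCompactSupport φ := by
    refine HasCompactSupport.intro (isCompact_closedBall (0 : ℝ × ℝ) (M + t)) fun q hq => ?_
    apply hsupp t q.1 q.2 ht
    rw [mem_closedBall_zero_iff, not_le] at hq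
    -- the sup norm of `q` is at most its Euclidean norm
    refine hq.le.trans ?_
    rw [Prod.norm_def]
    refine sup_le ?_ ?_
    · exact Real.abs_le_sqrt (by nlinarith [sq_nonneg q.2])
    · exact Real.abs_le_sqrt (by nlinarith [sq_nonneg q.1])
  set ψ : ℝ × ℝ → ℝ := fun q => q.1 * fderiv ℝ φ q (0, 1) - q.2 * fderiv ℝ φ q (1, 0) with hψdef
  have hψ : ContDiff ℝ 1 ψ := by
    have hfd : ContDiff ℝ 1 (fderiv ℝ φ) := hφ2.fderiv_right (by norm_num)
    rw [hψdef]
    fun_prop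
  have hs' : HasCompactSupport ψ := by
    have h1 : HasCompactSupport fun q : ℝ × ℝ => q.1 * fderiv ℝ φ q (0, 1) :=
      (hs.fderiv_apply ℝ (0, 1)).mul_left
    have h2 : HasCompactSupport fun q : ℝ × ℝ => q.2 * fderiv ℝ φ q (1, 0) :=
      (hs.fderiv_apply ℝ (1, 0)).mul_left
    exact h1.sub h2
  have hgφ : ∀ u v, g t u v = φ (u, v) := fun _ _ => rfl
  have hΩψ : ∀ u v, Om g t u v = ψ (u, v) := by
    intro u v
    simp only [Om, px_eq hgφ hφ, py_eq hgφ hφ, hψdef]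
  have key := pointwise_sq hφ hs hψ hs' (fun _ => rfl) hM hr
  rw [integral_energy_eq hgφ hφ hs, integral_energy_eq hΩψ hψ hs'] at key
  refine le_trans ?_ (mul_le_mul_of_nonneg_left (norms_le_sum (regOut M) g t) (by norm_num))
  have n1 := L2nS_nonneg (regOut M) (fun u v => g t u v)
  have n2 := L2nS_nonneg (regOut M) (fun u v => px g t u v)
  have n3 := L2nS_nonneg (regOut M) (fun u v => py g t u v)
  have n4 := L2nS_nonneg (regOut M) (fun u v => Om g t u v)
  have n5 := L2nS_nonneg (regOut M) (fun u v => px (Om g) t u v)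
  have n6 := L2nS_nonneg (regOut M) (fun u v => py (Om g) t u v)
  generalize L2nS (regOut M) (fun u v => g t u v) = a1 at *
  generalize L2nS (regOut M) (fun u v => px g t u v) = a2 at *
  generalize L2nS (regOut M) (fun u v => py g t u v) = a3 at *
  generalize L2nS (regOut M) (fun u v => Om g t u v) = a4 at *
  generalize L2nS (regOut M) (fun u v => px (Om g) t u v) = a5 at *
  generalize L2nS (regOut M) (fun u v => py (Om g) t u v) = a6 at *
  have hsum : a1 ^ 2 + a2 ^ 2 + a3 ^ 2 + (a4 ^ 2 + a5 ^ 2 + a6 ^ 2)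
      ≤ (a1 + a2 + a3 + (a4 + a5 + a6)) ^ 2 := by
    have : 0 ≤ a1 * (a2 + a3 + a4 + a5 + a6) + a2 * (a3 + a4 + a5 + a6) + a3 * (a4 + a5 + a6)
      + a4 * (a5 + a6) + a5 * a6 := by positivity
    nlinarith
  refine abs_le_of_sq_le_sq' ?_ (by positivity) |>.2
  rw [mul_pow, Real.sq_sqrt (by linarith), sq_abs]
  -- `1 + r ≤ 2r` because `r ≥ M + 1 ≥ 1`
  have h1 : (1 + rad x y) * g t x y ^ 2 ≤ 2 * (rad x y * g t x y ^ 2) := by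
    nlinarith [sq_nonneg (g t x y)]
  have h2 : rad x y * g t x y ^ 2
      ≤ 2 * (a1 ^ 2 + a2 ^ 2 + a3 ^ 2 + (a4 ^ 2 + a5 ^ 2 + a6 ^ 2)) := key
  linarith

end
end
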